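/- Assume 0 < η_i < 1/‖A_i‖² for i = 1, …, p and that the x₀-minimal norm solution x† satisfies the source condition x† − x₀ = A^* λ† for some λ† ∈ Y. Fix constants 0 < c₁ ≤ c₂. If δ > 0 and the stopping index n_δ is chosen such that c₁ δ^{−1} ≤ (n_δ + 1)/p ≤ c₂ δ^{−1}, then E[‖x_{n_δ}^δ − x†‖²] ≤ C δ, where C is a constant depending only on c₀, η̄, M₀ := ‖x₀ − x†‖² + c₀ Σ_{i=1}^p (1/η_i) ‖λ_i†‖², and c₁, c₂. -/

import Mathlib

/-- Expectation with respect to the first `m` i.i.d. uniformly distributed indices: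
for a quantity `f` determined by the coordinates `i_0, …, i_{m-1}` of the sample path,
`avg p hp m f = p^{-m} ∑_{(i_0,…,i_{m-1}) ∈ {1,…,p}^m} f`. -/
noncomputable def avg (p : ℕ) (hp : 0 < p) (m : ℕ) (f : (ℕ → Fin p) → ℝ) : ℝ :=
  (∑ σ : Fin m → Fin p, f (fun k => if h : k < m then σ ⟨k, h⟩ else ⟨0, hp⟩)) / (p : ℝ) ^ m

/-!
Put `z n = x n + n (x n - x (n - 1))`. The heavy ball recursion says exactly that `z` follows the
plain stochastic gradient recursion `z (n + 1) = z n - η i A i* (A i (x n) - b i)`, evaluated at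
the running mean `x n` of `z 0, …, z n`. The error is affine in the data, so it is the sum of
an iteration with data `0` started at `x₀ - x†` and one with the noise as data started at `0`.
Both are controlled by energies which do not grow in expectation, apart from the noise:
* `‖z n‖² + (n / p) ∑ i, η i ‖A i (x (n - 1)) - b i‖²` increases by at most `c₀⁻¹ ∑ η i ‖b i‖² / p`
  per step, whence the noise contributes `O((n / p) δ²)`;
* under the source condition the noiseless iteration lifts to a dual variable `ζ` with
  `z = ∑ j, A j* (ζ j)`, and adding `∑ j, ‖ζ j‖² / η j + (n / p) ‖x (n - 1)‖²` yields the rate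
  `O(p / n)`.
The stopping rule `n / p ∼ 1 / δ` balances the two contributions.
-/

section Average

variable {p : ℕ} (hp : 0 < p)

lemma avg_zero (f : (ℕ → Fin p) → ℝ) : avg p hp 0 f = f fun _ => ⟨0, hp⟩ := by
  simp [avg]

lemma avg_mono {m : ℕ} {f g : (ℕ → Fin p) → ℝ} (h : ∀ ω, f ω ≤ g ω) :
    avg p hp m f ≤ avg p hp m g :=
  div_le_div_of_nonneg_right (Finset.sum_le_sum fun _ _ => h _) (by positivity)

lemma avg_add (m : ℕ) (f g : (ℕ → Fin p) → ℝ) :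
    avg p hp m (fun ω => f ω + g ω) = avg p hp m f + avg p hp m g := by
  simp only [avg, Finset.sum_add_distrib, add_div]

lemma avg_const_mul (m : ℕ) (c : ℝ) (f : (ℕ → Fin p) → ℝ) :
    avg p hp m (fun ω => c * f ω) = c * avg p hp m f := by
  simp only [avg, ← Finset.mul_sum, mul_div_assoc]

lemma avg_const (m : ℕ) (c : ℝ) : avg p hp m (fun _ => c) = c := by
  simp [avg, hp.ne']

lemma avg_succ (m : ℕ) (f : (ℕ → Fin p) → ℝ) :
    avg p hp (m + 1) f = avg p hp m fun ω => (∑ i, f (Function.update ω m i)) / p := by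
  have snoc_eq_update (i : Fin p) (σ : Fin m → Fin p) :
      (fun k => if h : k < m + 1 then
        (Fin.snoc σ i : Fin (m + 1) → Fin p) ⟨k, h⟩ else ⟨0, hp⟩) =
      Function.update (fun k => if h : k < m then σ ⟨k, h⟩ else ⟨0, hp⟩) m i := by
    funext k
    rcases lt_trichotomy k m with h | rfl | h
    · simp [Function.update, h.ne, h, Nat.lt_succ_of_lt h, Fin.snoc]
    · simp [Fin.snoc]
    · simp [Function.update, h.ne', Nat.not_lt.2 h.le, Nat.not_lt.2 (Nat.succ_le_of_lt h)]
  unfold avg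
  rw [← (Fin.snocEquiv fun _ : Fin (m + 1) => Fin p).sum_comp, Fintype.sum_prod_type,
    Finset.sum_comm, ← Finset.sum_div, div_div, pow_succ']
  congr 1
  exact Finset.sum_congr rfl fun σ _ => Finset.sum_congr rfl fun i _ =>
    congrArg f (snoc_eq_update i σ)

end Average

section Trajectory

variable {ι S : Type*}

/-- The trajectory from `s` of the random dynamical system which, at time `n`, draws the index
`ω n` and applies the map `T n (ω n)`. -/
def trajectory (T : ℕ → ι → S → S) (s : S) (ω : ℕ → ι) : ℕ → S
  | 0 => s
  | n + 1 => T n (ω n) (trajectory T s ω n)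

variable {T : ℕ → ι → S → S} {s : S}

lemma eq_trajectory {ω : ℕ → ι} {x : ℕ → S} (h₀ : x 0 = s)
    (hx : ∀ n, x (n + 1) = T n (ω n) (x n)) (n : ℕ) : x n = trajectory T s ω n := by
  induction n with
  | zero => exact h₀
  | succ n ih => rw [hx, ih, trajectory]

lemma trajectory_congr {ω ω' : ℕ → ι} {n : ℕ} (h : ∀ k < n, ω k = ω' k) :
    trajectory T s ω n = trajectory T s ω' n := by
  induction n with
  | zero => rfl
  | succ n ih => rw [trajectory, trajectory, ih fun k hk => h k (hk.trans n.lt_succ_self),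
      h n n.lt_succ_self]

lemma trajectory_succ_update (ω : ℕ → ι) (n : ℕ) (i : ι) :
    trajectory T s (Function.update ω n i) (n + 1) = T n i (trajectory T s ω n) := by
  rw [trajectory, Function.update_self,
    trajectory_congr fun k hk => Function.update_of_ne hk.ne i ω]

lemma avg_trajectory_le_of_drift {p : ℕ} (hp : 0 < p) {T : ℕ → Fin p → S → S}
    {V : ℕ → S → ℝ} {c : ℝ} {n : ℕ}
    (hV : ∀ k < n, ∀ t, ∑ i, V (k + 1) (T k i t) ≤ p * V k t + c) :
    avg p hp n (fun ω => V n (trajectory T s ω n)) ≤ V 0 s + n * (c / p) := by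
  induction n with
  | zero => simp [avg_zero, trajectory]
  | succ n ih =>
    have hstep (t : S) : (∑ i, V (n + 1) (T n i t)) / p ≤ V n t + c / p := by
      have hp' : (0 : ℝ) < p := Nat.cast_pos.2 hp
      rw [div_le_iff₀ hp', add_mul, div_mul_cancel₀ _ hp'.ne', mul_comm (V n t)]
      exact hV n n.lt_succ_self t
    calc avg p hp (n + 1) (fun ω => V (n + 1) (trajectory T s ω (n + 1)))
        = avg p hp n (fun ω => (∑ i, V (n + 1) (T n i (trajectory T s ω n))) / p) := by
          simp only [avg_succ, trajectory_succ_update]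
      _ ≤ avg p hp n (fun ω => V n (trajectory T s ω n) + c / p) :=
          avg_mono hp fun ω => hstep _
      _ ≤ V 0 s + n * (c / p) + c / p := by
          rw [avg_add, avg_const]
          gcongr
          exact ih fun k hk => hV k (hk.trans n.lt_succ_self)
      _ = V 0 s + (n + 1 : ℕ) * (c / p) := by
          push_cast
          ring

end Trajectory

section RunningMean

/-- The mean of `n + 1` vectors, the last of which is `s.2` and the others of which have mean
`s.1`. For `n = 0` the component `s.1` is irrelevant. -/
noncomputable def runningMean {E : Type*} [AddCommGroup E] [Module ℝ E] (n : ℕ) (s : E × E) : E :=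
  ((n : ℝ) + 1)⁻¹ • ((n : ℝ) • s.1 + s.2)

section Module

variable {E : Type*} [AddCommGroup E] [Module ℝ E] (n : ℕ)

lemma runningMean_add (s t : E × E) :
    runningMean n (s + t) = runningMean n s + runningMean n t := by
  simp only [runningMean, Prod.fst_add, Prod.snd_add]
  module

lemma add_one_smul_runningMean (s : E × E) :
    ((n : ℝ) + 1) • runningMean n s = (n : ℝ) • s.1 + s.2 :=
  smul_inv_smul₀ n.cast_add_one_ne_zero _

lemma runningMean_eq_of_smul_eq {s : E × E} {x : E}
    (h : ((n : ℝ) + 1) • x = (n : ℝ) • s.1 + s.2) : runningMean n s = x := by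
  rw [runningMean, ← h, inv_smul_smul₀ n.cast_add_one_ne_zero]

lemma runningMean_map_sub {F : Type*} [AddCommGroup F] [Module ℝ F] (A : E →ₗ[ℝ] F) (b : F)
    (s : E × E) : runningMean n (A s.1 - b, A s.2 - b) = A (runningMean n s) - b := by
  refine runningMean_eq_of_smul_eq n ?_
  rw [smul_sub, ← map_smul, add_one_smul_runningMean, map_add, map_smul]
  module

end Module

variable {X : Type*} [NormedAddCommGroup X] [InnerProductSpace ℝ X] (n : ℕ) (s : X × X)

lemma le_two_inner_runningMean :
    ((n : ℝ) + 2) * ‖runningMean n s‖ ^ 2 - n * ‖s.1‖ ^ 2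
      ≤ 2 * inner ℝ s.2 (runningMean n s) := by
  set x := runningMean n s
  have hz : s.2 = ((n : ℝ) + 1) • x - (n : ℝ) • s.1 :=
    eq_sub_of_add_eq' (add_one_smul_runningMean n s).symm
  have hn : 0 ≤ (n : ℝ) * ‖s.1 - x‖ ^ 2 := by positivity
  rw [norm_sub_sq_real] at hn
  rw [hz, inner_sub_left, real_inner_smul_left, real_inner_smul_left, real_inner_self_eq_norm_sq]
  linarith

lemma norm_sq_runningMean_le :
    ((n : ℝ) + 1) * ‖runningMean n s‖ ^ 2 ≤ n * ‖s.1‖ ^ 2 + ‖s.2‖ ^ 2 := by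
  have hinner := le_two_inner_runningMean n s
  have hsq := sq_nonneg ‖s.2 - runningMean n s‖
  rw [norm_sub_sq_real] at hsq
  linarith

variable [CompleteSpace X] {Y : Type*} [NormedAddCommGroup Y] [InnerProductSpace ℝ Y]
  [CompleteSpace Y]

lemma norm_sq_adjoint_apply_le (A : X →L[ℝ] Y) (v : Y) :
    ‖A.adjoint v‖ ^ 2 ≤ ‖A‖ ^ 2 * ‖v‖ ^ 2 := by
  rw [← mul_pow]
  gcongr
  simpa only [LinearIsometryEquiv.norm_map] using A.adjoint.le_opNorm v

lemma norm_sq_sub_smul_adjoint_le (A : X →L[ℝ] Y) {η c : ℝ} (hη : 0 ≤ η)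
    (hc : c ≤ 1 - η * ‖A‖ ^ 2) (b : Y) :
    ‖s.2 - η • A.adjoint (A (runningMean n s) - b)‖ ^ 2
        + ((n : ℝ) + 1) * (η * ‖A (runningMean n s) - b‖ ^ 2)
        + (c * (η * ‖A (runningMean n s) - b‖ ^ 2)
          + 2 * (η * inner ℝ b (A (runningMean n s) - b)))
      ≤ ‖s.2‖ ^ 2 + n * (η * ‖A s.1 - b‖ ^ 2) := by
  set g := A (runningMean n s) - b
  have hinner : inner ℝ s.2 (A.adjoint g) = inner ℝ (A s.2 - b) g + inner ℝ b g := by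
    rw [ContinuousLinearMap.adjoint_inner_right, ← inner_add_left, sub_add_cancel]
  have hmean : ((n : ℝ) + 2) * ‖g‖ ^ 2 - n * ‖A s.1 - b‖ ^ 2 ≤ 2 * inner ℝ (A s.2 - b) g := by
    have h := le_two_inner_runningMean n (A s.1 - b, A s.2 - b)
    rwa [show runningMean n (A s.1 - b, A s.2 - b) = g from
      runningMean_map_sub n A.toLinearMap b s] at h
  have hexpand : ‖s.2 - η • A.adjoint g‖ ^ 2
      = ‖s.2‖ ^ 2 - 2 * (η * (inner ℝ (A s.2 - b) g + inner ℝ b g))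
        + η ^ 2 * ‖A.adjoint g‖ ^ 2 := by
    rw [norm_sub_sq_real, real_inner_smul_right, hinner, norm_smul, mul_pow, Real.norm_eq_abs,
      sq_abs]
  have hadj := mul_le_mul_of_nonneg_left (norm_sq_adjoint_apply_le A g) (sq_nonneg η)
  have hstep := mul_le_mul_of_nonneg_right hc (mul_nonneg hη (sq_nonneg ‖g‖))
  have hmean' := mul_le_mul_of_nonneg_left hmean hη
  linarith

end RunningMean

lemma sum_apply_update {ι M : Type*} [Fintype ι] [DecidableEq ι] [AddCommGroup M] {Y : ι → Type*}
    (f : ∀ i, Y i → M) (ζ : ∀ i, Y i) (i : ι) (v : Y i) :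
    ∑ j, f j (Function.update ζ i v j) = ∑ j, f j (ζ j) + (f i v - f i (ζ i)) := by
  simp only [Function.apply_update f, Finset.sum_update_of_mem (Finset.mem_univ i),
    Finset.sdiff_singleton_eq_erase]
  rw [← Finset.add_sum_erase _ (fun j => f j (ζ j)) (Finset.mem_univ i)]
  abel

section WeightedNorm

variable {ι : Type*} [Fintype ι] {Y : ι → Type*} [∀ i, NormedAddCommGroup (Y i)]

/-- The squared weighted norm `∑ i, η i ‖v i‖²` on a finite product; with the step sizes as
weights it measures residuals and noise, with their inverses it measures dual variables. -/
def weightedNormSq (η : ι → ℝ) (v : ∀ i, Y i) : ℝ :=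
  ∑ i, η i * ‖v i‖ ^ 2

lemma weightedNormSq_nonneg {η : ι → ℝ} (hη : ∀ i, 0 ≤ η i) (v : ∀ i, Y i) :
    0 ≤ weightedNormSq η v :=
  Finset.sum_nonneg fun i _ => mul_nonneg (hη i) (sq_nonneg _)

lemma weightedNormSq_neg (η : ι → ℝ) (v : ∀ i, Y i) :
    weightedNormSq η (-v) = weightedNormSq η v := by
  simp only [weightedNormSq, Pi.neg_apply, norm_neg]

lemma weightedNormSq_le_mul_sum_sq {η r : ι → ℝ} {a : ℝ} {v : ∀ i, Y i} (hη : ∀ i, 0 ≤ η i)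
    (ha : ∀ i, η i ≤ a) (hv : ∀ i, ‖v i‖ ≤ r i) : weightedNormSq η v ≤ a * ∑ i, r i ^ 2 := by
  rw [Finset.mul_sum]
  refine Finset.sum_le_sum fun i _ => ?_
  have : 0 ≤ a := (hη i).trans (ha i)
  gcongr
  exacts [ha i, hv i]

lemma weightedNormSq_young [∀ i, InnerProductSpace ℝ (Y i)] {η : ι → ℝ} (hη : ∀ i, 0 ≤ η i)
    {c : ℝ} (hc : 0 < c) (b g : ∀ i, Y i) :
    0 ≤ c⁻¹ * weightedNormSq η b
      + (c * weightedNormSq η g + 2 * ∑ i, η i * inner ℝ (b i) (g i)) := by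
  have hsq : c⁻¹ * weightedNormSq η (b + c • g) = c⁻¹ * weightedNormSq η b
      + (c * weightedNormSq η g + 2 * ∑ i, η i * inner ℝ (b i) (g i)) := by
    simp only [weightedNormSq, Finset.mul_sum, ← Finset.sum_add_distrib]
    refine Finset.sum_congr rfl fun i _ => ?_
    rw [Pi.add_apply, Pi.smul_apply, norm_add_sq_real, real_inner_smul_right, norm_smul, mul_pow,
      Real.norm_eq_abs, sq_abs]
    field_simp
    ring
  rw [← hsq]
  exact mul_nonneg (inv_nonneg.2 hc.le) (weightedNormSq_nonneg hη _)

lemma weightedNormSq_inv_update [DecidableEq ι] [∀ i, InnerProductSpace ℝ (Y i)] {η : ι → ℝ}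
    (ζ : ∀ i, Y i) {i : ι} (hη : 0 < η i) (v : Y i) :
    weightedNormSq η⁻¹ (Function.update ζ i (ζ i - η i • v))
      = weightedNormSq η⁻¹ ζ - 2 * inner ℝ (ζ i) v + η i * ‖v‖ ^ 2 := by
  have hηi := hη.ne'
  rw [weightedNormSq, sum_apply_update fun j (w : Y j) => η⁻¹ j * ‖w‖ ^ 2, norm_sub_sq_real,
    real_inner_smul_right, norm_smul, mul_pow, Real.norm_eq_abs, sq_abs, Pi.inv_apply,
    weightedNormSq]
  field_simp
  ring

end WeightedNorm

section HeavyBall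

variable {ι : Type*} {X : Type*} [NormedAddCommGroup X] [InnerProductSpace ℝ X] [CompleteSpace X]
  {Y : ι → Type*} [∀ i, NormedAddCommGroup (Y i)] [∀ i, InnerProductSpace ℝ (Y i)]
  [∀ i, CompleteSpace (Y i)] (A : ∀ i, X →L[ℝ] Y i) (η : ι → ℝ)

/-- One heavy ball step with data `b` along the operator `A i`. The state at time `n` is
`(x (n - 1), z n)` where `z n = x n + n (x n - x (n - 1))`, so that `x n` is its running mean. -/
noncomputable def heavyBallStep (b : ∀ i, Y i) (n : ℕ) (i : ι) (s : X × X) : X × X :=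
  (runningMean n s, s.2 - η i • (A i).adjoint (A i (runningMean n s) - b i))

lemma heavyBallStep_add (b b' : ∀ i, Y i) (n : ℕ) (i : ι) (s s' : X × X) :
    heavyBallStep A η (b + b') n i (s + s')
      = heavyBallStep A η b n i s + heavyBallStep A η b' n i s' := by
  simp only [heavyBallStep, runningMean_add, Prod.mk_add_mk, Prod.snd_add, Pi.add_apply, map_add,
    map_sub]
  congr 1
  module

lemma trajectory_heavyBallStep_add (b b' : ∀ i, Y i) (s s' : X × X) (ω : ℕ → ι) (n : ℕ) :
    trajectory (heavyBallStep A η (b + b')) (s + s') ω n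
      = trajectory (heavyBallStep A η b) s ω n + trajectory (heavyBallStep A η b') s' ω n :=
  (eq_trajectory (x := fun n => trajectory (heavyBallStep A η b) s ω n
      + trajectory (heavyBallStep A η b') s' ω n) rfl
    (fun _ => (heavyBallStep_add ..).symm) n).symm

variable {A η}

lemma eq_runningMean_trajectory_heavyBallStep {b : ∀ i, Y i} {ω : ℕ → ι} {x : ℕ → X}
    (hx : ∀ n : ℕ, x (n + 1) = x n
      - (((n : ℝ) + 2)⁻¹ * η (ω n)) • (A (ω n)).adjoint (A (ω n) (x n) - b (ω n))
      + ((n : ℝ) / ((n : ℝ) + 2)) • (x n - x (n - 1))) (n : ℕ) :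
    x n = runningMean n (trajectory (heavyBallStep A η b) (x 0, x 0) ω n) := by
  set state : ℕ → X × X := fun n => (x (n - 1), ((n : ℝ) + 1) • x n - (n : ℝ) • x (n - 1))
  have hmean (n : ℕ) : runningMean n (state n) = x n :=
    runningMean_eq_of_smul_eq n (by simp only [state, add_sub_cancel])
  have hstate : state n = trajectory (heavyBallStep A η b) (x 0, x 0) ω n := by
    refine eq_trajectory (by simp [state]) (fun n => ?_) n
    have hn : (n : ℝ) + 2 ≠ 0 := by positivity
    simp only [heavyBallStep, hmean]
    simp only [state, Nat.add_sub_cancel, hx n, Nat.cast_add, Nat.cast_one, Prod.mk.injEq,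
      true_and]
    match_scalars <;> field_simp <;> ring
  rw [← hstate, hmean]

end HeavyBall

section Energy

variable {p : ℕ} {X : Type*} [NormedAddCommGroup X] [InnerProductSpace ℝ X]
  {Y : Fin p → Type*} [∀ i, NormedAddCommGroup (Y i)] [∀ i, InnerProductSpace ℝ (Y i)]
  (A : ∀ i, X →L[ℝ] Y i) (η : Fin p → ℝ)

/-- The Lyapunov function of the heavy ball iteration with data `b`, evaluated at time `n` on the
state `s = (x (n - 1), z n)` of `heavyBallStep`. -/
noncomputable def primalEnergy (b : ∀ i, Y i) (n : ℕ) (s : X × X) : ℝ :=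
  ‖s.2‖ ^ 2 + n / p * weightedNormSq η fun i => A i s.1 - b i

/-- A Lyapunov function for `n ‖x (n - 1)‖²` up to the horizon `N`. Each step gives up one copy of
`primalEnergy`, which pays for `(n + 1) ‖x n‖² - n ‖x (n - 1)‖² ≤ ‖z n‖²`. -/
noncomputable def horizonEnergy (b : ∀ i, Y i) (N n : ℕ) (s : X × X) : ℝ :=
  n * ‖s.1‖ ^ 2 + (N - n) * primalEnergy A η b n s

variable {A η}

lemma norm_sq_le_primalEnergy (hη : ∀ i, 0 ≤ η i) (b : ∀ i, Y i) (n : ℕ) (s : X × X) :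
    ‖s.2‖ ^ 2 ≤ primalEnergy A η b n s :=
  le_add_of_nonneg_right (mul_nonneg (by positivity) (weightedNormSq_nonneg hη _))

lemma add_one_mul_norm_sq_runningMean_le_horizonEnergy (hη : ∀ i, 0 ≤ η i) (b : ∀ i, Y i) (n : ℕ)
    (s : X × X) : ((n : ℝ) + 1) * ‖runningMean n s‖ ^ 2 ≤ horizonEnergy A η b (n + 1) n s := by
  rw [horizonEnergy, Nat.cast_add, Nat.cast_one, add_sub_cancel_left, one_mul]
  exact (norm_sq_runningMean_le n s).trans (by gcongr; exact norm_sq_le_primalEnergy hη b n s)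

variable [CompleteSpace X] [∀ i, CompleteSpace (Y i)] (hp : 0 < p) {c : ℝ}
include hp

lemma sum_primalEnergy_heavyBallStep_add_le (hη : ∀ i, 0 ≤ η i)
    (hc : ∀ i, c ≤ 1 - η i * ‖A i‖ ^ 2) (b : ∀ i, Y i) (n : ℕ) (s : X × X) :
    ∑ i, primalEnergy A η b (n + 1) (heavyBallStep A η b n i s)
        + (c * weightedNormSq η (fun i => A i (runningMean n s) - b i)
          + 2 * ∑ i, η i * inner ℝ (b i) (A i (runningMean n s) - b i))
      ≤ p * primalEnergy A η b n s := by
  have hsum := Finset.sum_le_sum fun i (_ : i ∈ Finset.univ) =>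
    norm_sq_sub_smul_adjoint_le n s (A i) (hη i) (hc i) (b i)
  simp only [Finset.sum_add_distrib, ← Finset.mul_sum, Finset.sum_const, Finset.card_univ,
    Fintype.card_fin, nsmul_eq_mul] at hsum
  have hp' : (p : ℝ) ≠ 0 := Nat.cast_ne_zero.2 hp.ne'
  simp only [primalEnergy, heavyBallStep, Finset.sum_add_distrib, Finset.sum_const,
    Finset.card_univ, Fintype.card_fin, nsmul_eq_mul, mul_add, ← mul_assoc,
    mul_div_cancel₀ _ hp', Nat.cast_add, Nat.cast_one]
  simpa only [weightedNormSq, ← mul_assoc, add_assoc] using hsum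

lemma sum_primalEnergy_heavyBallStep_le (hη : ∀ i, 0 ≤ η i) (hc₀ : 0 < c)
    (hc : ∀ i, c ≤ 1 - η i * ‖A i‖ ^ 2) (b : ∀ i, Y i) (n : ℕ) (s : X × X) :
    ∑ i, primalEnergy A η b (n + 1) (heavyBallStep A η b n i s)
      ≤ p * primalEnergy A η b n s + c⁻¹ * weightedNormSq η b := by
  have hdrift := sum_primalEnergy_heavyBallStep_add_le hp hη hc b n s
  have hyoung := weightedNormSq_young hη hc₀ b fun i => A i (runningMean n s) - b i
  linarith

lemma sum_horizonEnergy_heavyBallStep_le (hη : ∀ i, 0 ≤ η i) (hc₀ : 0 < c)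
    (hc : ∀ i, c ≤ 1 - η i * ‖A i‖ ^ 2) (b : ∀ i, Y i) {N n : ℕ} (hn : n < N) (s : X × X) :
    ∑ i, horizonEnergy A η b N (n + 1) (heavyBallStep A η b n i s)
      ≤ p * horizonEnergy A η b N n s + N * (c⁻¹ * weightedNormSq η b) := by
  set r := c⁻¹ * weightedNormSq η b
  have hr : 0 ≤ r := mul_nonneg (inv_nonneg.2 hc₀.le) (weightedNormSq_nonneg hη b)
  have hN : (0 : ℝ) ≤ N - (n + 1) := sub_nonneg.2 (by exact_mod_cast hn)
  have hmean : ((n : ℝ) + 1) * ‖runningMean n s‖ ^ 2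
      ≤ n * ‖s.1‖ ^ 2 + primalEnergy A η b n s :=
    (norm_sq_runningMean_le n s).trans (by gcongr; exact norm_sq_le_primalEnergy hη b n s)
  have henergy := sum_primalEnergy_heavyBallStep_le hp hη hc₀ hc b n s
  calc ∑ i, horizonEnergy A η b N (n + 1) (heavyBallStep A η b n i s)
      = p * (((n : ℝ) + 1) * ‖runningMean n s‖ ^ 2)
        + (N - (n + 1)) * ∑ i, primalEnergy A η b (n + 1) (heavyBallStep A η b n i s) := by
        simp only [horizonEnergy, Finset.sum_add_distrib, ← Finset.mul_sum, heavyBallStep,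
          Finset.sum_const, Finset.card_univ, Fintype.card_fin, nsmul_eq_mul]
        push_cast
        ring
    _ ≤ p * (n * ‖s.1‖ ^ 2 + primalEnergy A η b n s)
        + (N - (n + 1)) * (p * primalEnergy A η b n s + r) := by gcongr
    _ = p * horizonEnergy A η b N n s + (N - (n + 1)) * r := by
        rw [horizonEnergy]
        ring
    _ ≤ p * horizonEnergy A η b N n s + N * r := by
        gcongr
        linarith [n.cast_nonneg (α := ℝ)]

lemma avg_norm_sq_runningMean_heavyBallStep_le_of_noise (hη : ∀ i, 0 ≤ η i) (hc₀ : 0 < c)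
    (hc : ∀ i, c ≤ 1 - η i * ‖A i‖ ^ 2) (b : ∀ i, Y i) (n : ℕ) :
    avg p hp n (fun ω => ‖runningMean n (trajectory (heavyBallStep A η b) 0 ω n)‖ ^ 2)
      ≤ n / p * (c⁻¹ * weightedNormSq η b) := by
  refine le_of_mul_le_mul_left ?_ (n.cast_add_one_pos (α := ℝ))
  calc ((n : ℝ) + 1) * avg p hp n (fun ω =>
          ‖runningMean n (trajectory (heavyBallStep A η b) 0 ω n)‖ ^ 2)
      ≤ avg p hp n (fun ω =>
          horizonEnergy A η b (n + 1) n (trajectory (heavyBallStep A η b) 0 ω n)) := by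
        rw [← avg_const_mul]
        exact avg_mono hp fun ω => add_one_mul_norm_sq_runningMean_le_horizonEnergy hη b n _
    _ ≤ horizonEnergy A η b (n + 1) 0 0
          + n * ((n + 1 : ℕ) * (c⁻¹ * weightedNormSq η b) / p) :=
        avg_trajectory_le_of_drift hp fun k hk =>
          sum_horizonEnergy_heavyBallStep_le hp hη hc₀ hc b (hk.trans n.lt_succ_self)
    _ = ((n : ℝ) + 1) * (n / p * (c⁻¹ * weightedNormSq η b)) := by
        simp only [horizonEnergy, primalEnergy, Prod.fst_zero, Prod.snd_zero, norm_zero,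
          Nat.cast_zero, Nat.cast_add, Nat.cast_one]
        ring

end Energy

section Dual

variable {p : ℕ} {X : Type*} [NormedAddCommGroup X] [InnerProductSpace ℝ X] [CompleteSpace X]
  {Y : Fin p → Type*} [∀ i, NormedAddCommGroup (Y i)] [∀ i, InnerProductSpace ℝ (Y i)]
  [∀ i, CompleteSpace (Y i)] (A : ∀ i, X →L[ℝ] Y i) (η : Fin p → ℝ)

/-- The state of `heavyBallStep` represented by a dual state `(x, ζ)`, with second component
`∑ j, A j* (ζ j)`. -/
noncomputable def toPrimal (s : X × ∀ j, Y j) : X × X :=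
  (s.1, ∑ j, (A j).adjoint (s.2 j))

/-- The heavy ball step with data `0` lifted along `toPrimal`. It changes only the `i`-th dual
component. -/
noncomputable def dualStep (n : ℕ) (i : Fin p) (s : X × ∀ j, Y j) : X × ∀ j, Y j :=
  (runningMean n (toPrimal A s),
    Function.update s.2 i (s.2 i - η i • A i (runningMean n (toPrimal A s))))

lemma toPrimal_dualStep (n : ℕ) (i : Fin p) (s : X × ∀ j, Y j) :
    toPrimal A (dualStep A η n i s) = heavyBallStep A η 0 n i (toPrimal A s) := by
  simp only [dualStep, heavyBallStep, Pi.zero_apply, sub_zero]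
  rw [toPrimal, sum_apply_update fun j => (A j).adjoint, map_sub, map_smul, sub_sub_cancel_left,
    ← sub_eq_add_neg]
  rfl

lemma toPrimal_trajectory_dualStep (s : X × ∀ j, Y j) (ω : ℕ → Fin p) (n : ℕ) :
    toPrimal A (trajectory (dualStep A η) s ω n)
      = trajectory (heavyBallStep A η 0) (toPrimal A s) ω n :=
  eq_trajectory (x := fun n => toPrimal A (trajectory (dualStep A η) s ω n)) rfl
    (fun _ => toPrimal_dualStep ..) n

/-- The Lyapunov function of the noiseless iteration in its dual formulation. -/
noncomputable def dualEnergy (c : ℝ) (n : ℕ) (s : X × ∀ j, Y j) : ℝ :=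
  weightedNormSq η⁻¹ s.2 + n / p * ‖s.1‖ ^ 2 + c⁻¹ * primalEnergy A η 0 n (toPrimal A s)

variable {A η} {c : ℝ}

lemma sum_weightedNormSq_dualStep (hη : ∀ i, 0 < η i) (n : ℕ) (s : X × ∀ j, Y j) :
    ∑ i, weightedNormSq η⁻¹ (dualStep A η n i s).2
      = p * weightedNormSq η⁻¹ s.2
        - 2 * inner ℝ (toPrimal A s).2 (runningMean n (toPrimal A s))
        + weightedNormSq η fun i => A i (runningMean n (toPrimal A s)) := by
  simp only [dualStep, weightedNormSq_inv_update _ (hη _), Finset.sum_add_distrib,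
    Finset.sum_sub_distrib, ← Finset.mul_sum, Finset.sum_const, Finset.card_univ,
    Fintype.card_fin, nsmul_eq_mul, ← ContinuousLinearMap.adjoint_inner_left, ← sum_inner]
  rfl

lemma div_mul_norm_sq_le_dualEnergy (hη : ∀ i, 0 ≤ η i) (hc₀ : 0 < c) (n : ℕ)
    (s : X × ∀ j, Y j) : n / p * ‖s.1‖ ^ 2 ≤ dualEnergy A η c n s := by
  have hdual : 0 ≤ weightedNormSq η⁻¹ s.2 := weightedNormSq_nonneg (fun i => inv_nonneg.2 (hη i)) _
  have hprimal : 0 ≤ primalEnergy A η 0 n (toPrimal A s) :=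
    (sq_nonneg _).trans (norm_sq_le_primalEnergy hη 0 n _)
  exact (le_add_of_nonneg_left hdual).trans (le_add_of_nonneg_right (by positivity))

variable (hp : 0 < p)
include hp

lemma sum_dualEnergy_dualStep_le (hη : ∀ i, 0 < η i) (hc₀ : 0 < c)
    (hc : ∀ i, c ≤ 1 - η i * ‖A i‖ ^ 2) (n : ℕ) (s : X × ∀ j, Y j) :
    ∑ i, dualEnergy A η c (n + 1) (dualStep A η n i s) ≤ p * dualEnergy A η c n s := by
  set x := runningMean n (toPrimal A s) with hx
  have hp' : (p : ℝ) ≠ 0 := Nat.cast_ne_zero.2 hp.ne'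
  have hprimal : c⁻¹ * ∑ i, primalEnergy A η 0 (n + 1) (heavyBallStep A η 0 n i (toPrimal A s))
      + weightedNormSq η (fun i => A i x) ≤ p * (c⁻¹ * primalEnergy A η 0 n (toPrimal A s)) := by
    have h := sum_primalEnergy_heavyBallStep_add_le hp (fun i => (hη i).le) hc 0 n (toPrimal A s)
    simp only [Pi.zero_apply, inner_zero_left, mul_zero, Finset.sum_const_zero, add_zero,
      sub_zero, ← hx] at h
    have h' := mul_le_mul_of_nonneg_left h (inv_nonneg.2 hc₀.le)
    rwa [mul_add, inv_mul_cancel_left₀ hc₀.ne', mul_left_comm] at h'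
  have hmean : ((n : ℝ) + 1) * ‖x‖ ^ 2 ≤ n * ‖s.1‖ ^ 2 + 2 * inner ℝ (toPrimal A s).2 x := by
    have h : ((n : ℝ) + 2) * ‖x‖ ^ 2 - n * ‖s.1‖ ^ 2 ≤ 2 * inner ℝ (toPrimal A s).2 x :=
      le_two_inner_runningMean n (toPrimal A s)
    linarith [sq_nonneg ‖x‖]
  calc ∑ i, dualEnergy A η c (n + 1) (dualStep A η n i s)
      = (p * weightedNormSq η⁻¹ s.2 - 2 * inner ℝ (toPrimal A s).2 x
          + weightedNormSq η fun i => A i x) + ((n : ℝ) + 1) * ‖x‖ ^ 2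
        + c⁻¹ * ∑ i, primalEnergy A η 0 (n + 1) (heavyBallStep A η 0 n i (toPrimal A s)) := by
        simp only [dualEnergy, toPrimal_dualStep, Finset.sum_add_distrib,
          sum_weightedNormSq_dualStep hη, ← Finset.mul_sum]
        simp only [dualStep, ← hx, Finset.sum_const, Finset.card_univ, Fintype.card_fin,
          nsmul_eq_mul, Nat.cast_add, Nat.cast_one]
        field_simp
    _ ≤ p * weightedNormSq η⁻¹ s.2 + n * ‖s.1‖ ^ 2
        + p * (c⁻¹ * primalEnergy A η 0 n (toPrimal A s)) := by linarith
    _ = p * dualEnergy A η c n s := by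
        rw [dualEnergy]
        field_simp

lemma add_one_div_mul_norm_sq_runningMean_le_dualEnergy (hη : ∀ i, 0 < η i) (hc₀ : 0 < c)
    (hc : ∀ i, c ≤ 1 - η i * ‖A i‖ ^ 2) (n : ℕ) (s : X × ∀ j, Y j) :
    ((n : ℝ) + 1) / p * ‖runningMean n (toPrimal A s)‖ ^ 2 ≤ dualEnergy A η c n s := by
  have hp' : (0 : ℝ) < p := Nat.cast_pos.2 hp
  refine le_of_mul_le_mul_left ?_ hp'
  calc p * (((n : ℝ) + 1) / p * ‖runningMean n (toPrimal A s)‖ ^ 2)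
      = ∑ i : Fin p, ((n + 1 : ℕ) : ℝ) / p * ‖(dualStep A η n i s).1‖ ^ 2 := by
        simp [dualStep]
    _ ≤ ∑ i, dualEnergy A η c (n + 1) (dualStep A η n i s) :=
        Finset.sum_le_sum fun i _ =>
          div_mul_norm_sq_le_dualEnergy (fun i => (hη i).le) hc₀ (n + 1) _
    _ ≤ p * dualEnergy A η c n s := sum_dualEnergy_dualStep_le hp hη hc₀ hc n s

lemma avg_norm_sq_runningMean_heavyBallStep_le_of_source (hη : ∀ i, 0 < η i) (hc₀ : 0 < c)
    (hc : ∀ i, c ≤ 1 - η i * ‖A i‖ ^ 2) (μ : ∀ j, Y j) {e : X}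
    (he : e = ∑ j, (A j).adjoint (μ j)) (n : ℕ) :
    ((n : ℝ) + 1) / p * avg p hp n (fun ω =>
        ‖runningMean n (trajectory (heavyBallStep A η 0) (e, e) ω n)‖ ^ 2)
      ≤ c⁻¹ * (‖e‖ ^ 2 + c * weightedNormSq η⁻¹ μ) := by
  have hstart : toPrimal A (e, μ) = (e, e) := Prod.ext rfl he.symm
  calc ((n : ℝ) + 1) / p * avg p hp n (fun ω =>
        ‖runningMean n (trajectory (heavyBallStep A η 0) (e, e) ω n)‖ ^ 2)
      ≤ avg p hp n (fun ω => dualEnergy A η c n (trajectory (dualStep A η) (e, μ) ω n)) := by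
        rw [← avg_const_mul, ← hstart]
        simp only [← toPrimal_trajectory_dualStep]
        exact avg_mono hp fun ω =>
          add_one_div_mul_norm_sq_runningMean_le_dualEnergy hp hη hc₀ hc n _
    _ ≤ dualEnergy A η c 0 (e, μ) + n * (0 / p) :=
        avg_trajectory_le_of_drift hp fun k _ s => by
          rw [add_zero]
          exact sum_dualEnergy_dualStep_le hp hη hc₀ hc k s
    _ = c⁻¹ * (‖e‖ ^ 2 + c * weightedNormSq η⁻¹ μ) := by
        simp only [dualEnergy, primalEnergy, hstart, Nat.cast_zero, zero_div, zero_mul, mul_zero,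
          add_zero]
        rw [mul_add, inv_mul_cancel_left₀ hc₀.ne', add_comm]

end Dual

section Error

variable {p : ℕ} (hp : 0 < p) {X : Type*} [NormedAddCommGroup X] [InnerProductSpace ℝ X]
  [CompleteSpace X] {Y : Fin p → Type*} [∀ i, NormedAddCommGroup (Y i)]
  [∀ i, InnerProductSpace ℝ (Y i)] [∀ i, CompleteSpace (Y i)] {A : ∀ i, X →L[ℝ] Y i}
  {η : Fin p → ℝ} {c : ℝ}

lemma avg_norm_sq_runningMean_heavyBallStep_le (hη : ∀ i, 0 < η i) (hc₀ : 0 < c)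
    (hc : ∀ i, c ≤ 1 - η i * ‖A i‖ ^ 2) (b μ : ∀ j, Y j) {e : X}
    (he : e = ∑ j, (A j).adjoint (μ j)) (n : ℕ) :
    avg p hp n (fun ω => ‖runningMean n (trajectory (heavyBallStep A η b) (e, e) ω n)‖ ^ 2)
      ≤ 2 * ((((n : ℝ) + 1) / p)⁻¹ * (c⁻¹ * (‖e‖ ^ 2 + c * weightedNormSq η⁻¹ μ))
        + ((n : ℝ) + 1) / p * (c⁻¹ * weightedNormSq η b)) := by
  have hη' (i : Fin p) : 0 ≤ η i := (hη i).le
  have hsource := avg_norm_sq_runningMean_heavyBallStep_le_of_source hp hη hc₀ hc μ he n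
  have hnoise := avg_norm_sq_runningMean_heavyBallStep_le_of_noise hp hη' hc₀ hc b n
  have hsplit (ω : ℕ → Fin p) : trajectory (heavyBallStep A η b) (e, e) ω n
      = trajectory (heavyBallStep A η 0) (e, e) ω n + trajectory (heavyBallStep A η b) 0 ω n := by
    rw [← trajectory_heavyBallStep_add, zero_add, add_zero]
  calc avg p hp n (fun ω => ‖runningMean n (trajectory (heavyBallStep A η b) (e, e) ω n)‖ ^ 2)
      ≤ 2 * (avg p hp n (fun ω =>
            ‖runningMean n (trajectory (heavyBallStep A η 0) (e, e) ω n)‖ ^ 2)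
          + avg p hp n (fun ω =>
            ‖runningMean n (trajectory (heavyBallStep A η b) 0 ω n)‖ ^ 2)) := by
        rw [← avg_add, ← avg_const_mul]
        refine avg_mono hp fun ω => ?_
        rw [hsplit, runningMean_add]
        exact (pow_le_pow_left₀ (norm_nonneg _) (norm_add_le _ _) 2).trans add_sq_le
    _ ≤ _ := by
        gcongr
        · exact (le_inv_mul_iff₀ (div_pos n.cast_add_one_pos (Nat.cast_pos.2 hp))).2 hsource
        · refine hnoise.trans ?_
          have := weightedNormSq_nonneg hη' b
          gcongr
          exact le_add_of_nonneg_right zero_le_one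

lemma avg_norm_sq_heavyBall_sub_le (hη : ∀ i, 0 < η i) (hc₀ : 0 < c)
    (hc : ∀ i, c ≤ 1 - η i * ‖A i‖ ^ 2) {y b μ : ∀ j, Y j} {x : (ℕ → Fin p) → ℕ → X} {x₀ a : X}
    (hx₀ : ∀ ω, x ω 0 = x₀)
    (hx : ∀ ω, ∀ n : ℕ, x ω (n + 1) = x ω n
      - (((n : ℝ) + 2)⁻¹ * η (ω n)) • (A (ω n)).adjoint (A (ω n) (x ω n) - b (ω n))
      + ((n : ℝ) / ((n : ℝ) + 2)) • (x ω n - x ω (n - 1)))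
    (ha : ∀ i, A i a = y i) (hμ : a - x₀ = ∑ j, (A j).adjoint (μ j)) (n : ℕ) :
    avg p hp n (fun ω => ‖x ω n - a‖ ^ 2)
      ≤ 2 * ((((n : ℝ) + 1) / p)⁻¹ * (c⁻¹ * (‖x₀ - a‖ ^ 2 + c * weightedNormSq η⁻¹ μ))
        + ((n : ℝ) + 1) / p * (c⁻¹ * weightedNormSq η (b - y))) := by
  have herror (ω : ℕ → Fin p) := eq_runningMean_trajectory_heavyBallStep (A := A) (η := η)
    (b := b - y) (ω := ω) (x := fun n => x ω n - a)
    (fun n => by simp only [hx ω n, map_sub, ha, Pi.sub_apply]; module) n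
  have hsource : x₀ - a = ∑ j, (A j).adjoint ((-μ) j) := by
    simp only [Pi.neg_apply, map_neg, Finset.sum_neg_distrib, ← hμ, neg_sub]
  simp only [herror, hx₀]
  rw [← weightedNormSq_neg η⁻¹ μ]
  exact avg_norm_sq_runningMean_heavyBallStep_le hp hη hc₀ hc (b - y) (-μ) hsource n

end Error

lemma one_sub_mul_sq_pos {η a : ℝ} (hη : 0 < η) (h : η < 1 / a ^ 2) : 0 < 1 - η * a ^ 2 :=
  sub_pos.2 ((lt_div_iff₀ (one_div_pos.1 (hη.trans h))).1 h)

lemma balance_le_of_stopping_rule {t δ c₁ c₂ K S W : ℝ} (hδ : 0 < δ) (hc₁ : 0 < c₁) (hK : 0 ≤ K)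
    (hS : 0 ≤ S) (hW : W ≤ S * δ ^ 2) (hlow : c₁ * δ⁻¹ ≤ t) (hupp : t ≤ c₂ * δ⁻¹) :
    t⁻¹ * K + t * W ≤ (c₁⁻¹ * K + c₂ * S) * δ := by
  have ht : 0 < t := (by positivity : 0 < c₁ * δ⁻¹).trans_le hlow
  calc t⁻¹ * K + t * W ≤ t⁻¹ * K + t * (S * δ ^ 2) := by gcongr
    _ ≤ (c₁ * δ⁻¹)⁻¹ * K + c₂ * δ⁻¹ * (S * δ ^ 2) := by gcongr
    _ = (c₁⁻¹ * K + c₂ * S) * δ := by field_simp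

/-- **Theorem SHB.thm (rate of convergence under an a priori stopping rule).**
There is a constant `C = C (c₀, η̄, M₀, c₁, c₂)`, depending only on `c₀`, `η̄`,
`M₀ := ‖x₀ − x†‖² + c₀ ∑_i (1/η i) ‖λ† i‖²` and the fixed constants `0 < c₁ ≤ c₂`,
such that for every problem instance with `0 < η i < 1/‖A i‖²`, source condition
`x† − x₀ = A* λ†` for the `x₀`-minimal norm solution `x†`, noisy data of total noise
level `δ > 0`, and stopping index `n_δ` with `c₁ δ⁻¹ ≤ (n_δ + 1)/p ≤ c₂ δ⁻¹`, the
stochastic heavy-ball iterates satisfy `E[‖x^δ_{n_δ} − x†‖²] ≤ C δ`. -/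
theorem stmt_11 :
    ∃ C : ℝ → ℝ → ℝ → ℝ → ℝ → ℝ,
      ∀ (p : ℕ) (hp : 0 < p)
        (X : Type) (_ : NormedAddCommGroup X), ∀ (_ : InnerProductSpace ℝ X)
        (_ : CompleteSpace X)
        (Y : Fin p → Type) (_ : ∀ i, NormedAddCommGroup (Y i)),
        ∀ (_ : ∀ i, InnerProductSpace ℝ (Y i)) (_ : ∀ i, CompleteSpace (Y i))
        (A : ∀ i, X →L[ℝ] Y i) (y yδ : ∀ i, Y i) (δi : Fin p → ℝ) (δ : ℝ)
        (η : Fin p → ℝ) (ηbar c₀ : ℝ) (x₀ xdag : X) (lamdag : ∀ j, Y j) (M₀ : ℝ)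
        (xδ : (ℕ → Fin p) → ℕ → X) (c₁ c₂ : ℝ) (nδ : ℕ),
        (∀ i, ‖yδ i - y i‖ ≤ δi i) →
        δ = Real.sqrt (∑ i, (δi i) ^ 2) →
        (∀ i, 0 < η i ∧ η i < 1 / ‖A i‖ ^ 2) →
        IsGreatest (Set.range η) ηbar →
        IsLeast (Set.range fun i => 1 - η i * ‖A i‖ ^ 2) c₀ →
        (∀ i, (A i) xdag = y i) →
        (∀ x' : X, (∀ i, (A i) x' = y i) → ‖xdag - x₀‖ ≤ ‖x' - x₀‖) →
        xdag - x₀ = ∑ j, (A j).adjoint (lamdag j) →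
        M₀ = ‖x₀ - xdag‖ ^ 2 + c₀ * ∑ i, (η i)⁻¹ * ‖lamdag i‖ ^ 2 →
        (∀ ω, xδ ω 0 = x₀) →
        (∀ ω, ∀ n : ℕ, xδ ω (n + 1) = xδ ω n
          - (((n : ℝ) + 2)⁻¹ * η (ω n)) •
              ((A (ω n)).adjoint ((A (ω n)) (xδ ω n) - yδ (ω n)))
          + ((n : ℝ) / ((n : ℝ) + 2)) • (xδ ω n - xδ ω (n - 1))) →
        0 < c₁ → c₁ ≤ c₂ → 0 < δ →
        c₁ * δ⁻¹ ≤ ((nδ : ℝ) + 1) / p → ((nδ : ℝ) + 1) / p ≤ c₂ * δ⁻¹ →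
        avg p hp nδ (fun ω => ‖xδ ω nδ - xdag‖ ^ 2) ≤ C c₀ ηbar M₀ c₁ c₂ * δ := by
  refine ⟨fun c₀ ηbar M₀ c₁ c₂ => 2 * (c₁⁻¹ * (c₀⁻¹ * M₀) + c₂ * (c₀⁻¹ * ηbar)), ?_⟩
  rintro p hp X _ _ _ Y _ _ _ A y yδ δi δ η ηbar c₀ x₀ xdag lamdag M₀ xδ c₁ c₂ nδ hyδ hδ_eq hη
    hηbar hc hxdag _ hsource rfl hx₀ hrec hc₁ _ hδ hlow hupp
  have hη₀ (i : Fin p) : 0 ≤ η i := (hη i).1.le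
  have hη_le (i : Fin p) : η i ≤ ηbar := hηbar.2 ⟨i, rfl⟩
  have hc₀ : 0 < c₀ := by
    obtain ⟨i, rfl⟩ := hc.1
    exact one_sub_mul_sq_pos (hη i).1 (hη i).2
  have hnoise : weightedNormSq η (yδ - y) ≤ ηbar * δ ^ 2 := by
    rw [hδ_eq, Real.sq_sqrt (Finset.sum_nonneg fun i _ => sq_nonneg _)]
    exact weightedNormSq_le_mul_sum_sq hη₀ hη_le hyδ
  have hηbar₀ : 0 ≤ ηbar := (hη₀ ⟨0, hp⟩).trans (hη_le _)
  have hlam := weightedNormSq_nonneg (fun i => inv_nonneg.2 (hη₀ i)) lamdag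
  refine (avg_norm_sq_heavyBall_sub_le hp (fun i => (hη i).1) hc₀ (fun i => hc.2 ⟨i, rfl⟩)
    hx₀ hrec hxdag hsource nδ).trans ?_
  rw [mul_assoc 2]
  gcongr
  refine balance_le_of_stopping_rule hδ hc₁ ?_ (by positivity) ?_ hlow hupp
  · exact mul_nonneg (by positivity) (add_nonneg (by positivity) (mul_nonneg hc₀.le hlam))
  · rw [mul_assoc]
    gcongr
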